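/- Let (Ω, ℰ, P) be a probability space, {𝔸_ε}_{ε ∈ ℝ_{>0}} ⊆ ℰ a family of events with P(𝔸_ε) > 0 for every ε > 0, and A₁, …, A_n : Ω → ℝ random variables such that for every c ∈ ℝ and every i ∈ {1, …, n} one has limsup_{ε↓0} E[exp(c A_i) | 𝔸_ε] ≤ 1. Then for every c ∈ ℝ one has lim_{ε↓0} E[exp(c A₁ + ⋯ + c A_n) | 𝔸_ε] = 1. -/

import Mathlib

open MeasureTheory Filter

/-!
Write `M_X(c) = E[exp (c X)]`. Since `2uv ≤ u² + v²`, we have `2 M_{X+Y}(c) ≤ M_X(2c) + M_Y(2c)`.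
Consequently the random variables all of whose exponential moments have limsup at most `1` are
closed under addition. The same inequality with `Y = -X` reads `2 ≤ M_X(2c) + M_X(-2c)`, so the
upper bound at `-c` forces the matching lower bound at `c`.
-/

open scoped ENNReal

section ExpMoment

variable {Ω : Type*} [MeasurableSpace Ω] {μ : Measure Ω} {X Y : Ω → ℝ}

/-- The exponential moment `E[exp (c X)]` with values in `[0, ∞]`, in contrast to
`ProbabilityTheory.mgf`, which is `0` when the moment is infinite. -/
noncomputable def expMoment (μ : Measure Ω) (X : Ω → ℝ) (c : ℝ) : ℝ≥0∞ :=
  ∫⁻ ω, ENNReal.ofReal (Real.exp (c * X ω)) ∂μ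

lemma expMoment_zero [IsProbabilityMeasure μ] (c : ℝ) : expMoment μ 0 c = 1 := by
  simp [expMoment]

lemma expMoment_smul (b c : ℝ) : expMoment μ (b • X) c = expMoment μ X (c * b) := by
  simp only [expMoment, Pi.smul_apply, smul_eq_mul, mul_assoc]

lemma expMoment_neg (c : ℝ) : expMoment μ (-X) c = expMoment μ X (-c) := by
  simp only [expMoment, Pi.neg_apply, mul_neg, neg_mul]

lemma two_mul_exp_add_le (x y : ℝ) :
    2 * Real.exp (x + y) ≤ Real.exp (2 * x) + Real.exp (2 * y) := by
  simpa only [Real.exp_add, mul_assoc, two_mul x, two_mul y, sq]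
    using two_mul_le_add_sq (Real.exp x) (Real.exp y)

lemma two_mul_expMoment_add_le (hX : AEMeasurable X μ) (c : ℝ) :
    2 * expMoment μ (X + Y) c ≤ expMoment μ X (2 * c) + expMoment μ Y (2 * c) := by
  have pointwise (ω : Ω) : 2 * ENNReal.ofReal (Real.exp (c * (X + Y) ω)) ≤
      ENNReal.ofReal (Real.exp (2 * c * X ω)) + ENNReal.ofReal (Real.exp (2 * c * Y ω)) := by
    rw [← ENNReal.ofReal_ofNat 2, ← ENNReal.ofReal_mul zero_le_two,
      ← ENNReal.ofReal_add (Real.exp_nonneg _) (Real.exp_nonneg _), Pi.add_apply, mul_add,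
      mul_assoc, mul_assoc]
    exact ENNReal.ofReal_le_ofReal (two_mul_exp_add_le _ _)
  calc
    2 * expMoment μ (X + Y) c
      = ∫⁻ ω, 2 * ENNReal.ofReal (Real.exp (c * (X + Y) ω)) ∂μ :=
        (lintegral_const_mul' _ _ ENNReal.ofNat_ne_top).symm
    _ ≤ ∫⁻ ω, ENNReal.ofReal (Real.exp (2 * c * X ω)) +
          ENNReal.ofReal (Real.exp (2 * c * Y ω)) ∂μ := lintegral_mono pointwise
    _ = expMoment μ X (2 * c) + expMoment μ Y (2 * c) := lintegral_add_left' (by fun_prop) _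

lemma expMoment_add_le_max (hX : AEMeasurable X μ) (c : ℝ) :
    expMoment μ (X + Y) c ≤ max (expMoment μ X (2 * c)) (expMoment μ Y (2 * c)) := by
  refine (ENNReal.mul_le_mul_iff_right two_ne_zero ENNReal.ofNat_ne_top).1 ?_
  calc
    2 * expMoment μ (X + Y) c ≤ expMoment μ X (2 * c) + expMoment μ Y (2 * c) :=
      two_mul_expMoment_add_le hX c
    _ ≤ 2 * max (expMoment μ X (2 * c)) (expMoment μ Y (2 * c)) := by
      rw [two_mul (max _ _)]
      exact add_le_add (le_max_left _ _) (le_max_right _ _)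

lemma two_le_expMoment_add_expMoment_neg [IsProbabilityMeasure μ] (hX : AEMeasurable X μ) (c : ℝ) :
    2 ≤ expMoment μ X c + expMoment μ X (-c) := by
  simpa only [add_neg_cancel, expMoment_zero, expMoment_neg, mul_one,
    mul_div_cancel₀ c (two_ne_zero' ℝ)] using two_mul_expMoment_add_le (Y := -X) hX (c / 2)

end ExpMoment

section Limsup

variable {α Ω ι : Type*} [MeasurableSpace Ω] {μ : α → Measure Ω} {l : Filter α} {X Y : Ω → ℝ}

/-- Every exponential moment of `X` under the measures `μ a` has limsup at most `1` along `l`.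
This is the hypothesis on each summand, stated for an arbitrary family of measures in place of
the conditional measures given the events of the family. -/
def LimsupExpMomentLEOne (μ : α → Measure Ω) (l : Filter α) (X : Ω → ℝ) : Prop :=
  ∀ c : ℝ, limsup (fun a => expMoment (μ a) X c) l ≤ 1

namespace LimsupExpMomentLEOne

lemma zero (hμ : ∀ᶠ a in l, IsProbabilityMeasure (μ a)) : LimsupExpMomentLEOne μ l 0 := by
  refine fun c => limsup_le_of_le (h := ?_)
  filter_upwards [hμ] with a _
  exact (expMoment_zero c).le

lemma smul (hX : LimsupExpMomentLEOne μ l X) (b : ℝ) : LimsupExpMomentLEOne μ l (b • X) :=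
  fun c => by simpa only [expMoment_smul] using hX (c * b)

lemma add (hXm : ∀ a, AEMeasurable X (μ a)) (hX : LimsupExpMomentLEOne μ l X)
    (hY : LimsupExpMomentLEOne μ l Y) : LimsupExpMomentLEOne μ l (X + Y) := fun c =>
  calc
    limsup (fun a => expMoment (μ a) (X + Y) c) l
      ≤ limsup (fun a => max (expMoment (μ a) X (2 * c)) (expMoment (μ a) Y (2 * c))) l :=
        limsup_le_limsup (.of_forall fun a => expMoment_add_le_max (hXm a) c)
    _ = max (limsup (fun a => expMoment (μ a) X (2 * c)) l)
          (limsup (fun a => expMoment (μ a) Y (2 * c)) l) := limsup_max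
    _ ≤ 1 := max_le (hX _) (hY _)

lemma sum (hμ : ∀ᶠ a in l, IsProbabilityMeasure (μ a)) {s : Finset ι} {A : ι → Ω → ℝ}
    (hAm : ∀ i ∈ s, ∀ a, AEMeasurable (A i) (μ a))
    (hA : ∀ i ∈ s, LimsupExpMomentLEOne μ l (A i)) :
    LimsupExpMomentLEOne μ l (∑ i ∈ s, A i) := by
  induction s using Finset.cons_induction with
  | empty => simpa only [Finset.sum_empty] using zero hμ
  | cons i s hi ih =>
    rw [Finset.forall_mem_cons] at hAm hA
    rw [Finset.sum_cons]
    exact add hAm.1 hA.1 (ih hAm.2 hA.2)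

lemma one_le_liminf [l.NeBot] (hμ : ∀ᶠ a in l, IsProbabilityMeasure (μ a))
    (hXm : ∀ a, AEMeasurable X (μ a)) (hX : LimsupExpMomentLEOne μ l X) (c : ℝ) :
    1 ≤ liminf (fun a => expMoment (μ a) X c) l :=
  calc
    (1 : ℝ≥0∞) = 2 - 1 :=
      ENNReal.eq_sub_of_add_eq ENNReal.one_ne_top one_add_one_eq_two
    _ ≤ 2 - limsup (fun a => expMoment (μ a) X (-c)) l := tsub_le_tsub_left (hX (-c)) 2
    _ = liminf (fun a => 2 - expMoment (μ a) X (-c)) l :=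
      (ENNReal.liminf_const_sub l _ ENNReal.ofNat_ne_top).symm
    _ ≤ liminf (fun a => expMoment (μ a) X c) l := by
      refine liminf_le_liminf ?_
      filter_upwards [hμ] with a _
      exact tsub_le_iff_right.2 (two_le_expMoment_add_expMoment_neg (hXm a) c)

lemma tendsto_expMoment (hμ : ∀ᶠ a in l, IsProbabilityMeasure (μ a))
    (hXm : ∀ a, AEMeasurable X (μ a)) (hX : LimsupExpMomentLEOne μ l X) (c : ℝ) :
    Tendsto (fun a => expMoment (μ a) X c) l (nhds 1) := by
  obtain rfl | _ := l.eq_or_neBot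
  · exact tendsto_bot
  · exact tendsto_of_le_liminf_of_limsup_le (one_le_liminf hμ hXm hX c) (hX c)

end LimsupExpMomentLEOne

end Limsup

theorem stmt19_general {α Ω ι : Type*} [MeasurableSpace Ω] {μ : α → Measure Ω} {l : Filter α}
    (hμ : ∀ᶠ a in l, IsProbabilityMeasure (μ a)) {s : Finset ι} {A : ι → Ω → ℝ}
    (hA : ∀ i ∈ s, ∀ a, AEMeasurable (A i) (μ a))
    (hup : ∀ i ∈ s, ∀ c : ℝ,
      limsup (fun a => ∫⁻ ω, ENNReal.ofReal (Real.exp (c * A i ω)) ∂μ a) l ≤ 1) (c : ι → ℝ) :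
    Tendsto (fun a => ∫⁻ ω, ENNReal.ofReal (Real.exp (∑ i ∈ s, c i * A i ω)) ∂μ a) l (nhds 1) := by
  have smul_measurable : ∀ i ∈ s, ∀ a, AEMeasurable (c i • A i) (μ a) :=
    fun i hi a => (hA i hi a).const_smul (c i)
  have sum_limsup : LimsupExpMomentLEOne μ l (∑ i ∈ s, c i • A i) :=
    .sum hμ smul_measurable fun i hi => .smul (hup i hi) (c i)
  simpa only [expMoment, one_mul, Finset.sum_apply, Pi.smul_apply, smul_eq_mul] using
    sum_limsup.tendsto_expMoment hμ
      (fun a => Finset.aemeasurable_sum s fun i hi => smul_measurable i hi a) 1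

lemma lintegral_cond_eq_setLIntegral_div {Ω : Type*} [MeasurableSpace Ω] (P : Measure Ω)
    (B : Set Ω) (f : Ω → ℝ≥0∞) :
    ∫⁻ ω, f ω ∂ProbabilityTheory.cond P B = (∫⁻ ω in B, f ω ∂P) / P B := by
  rw [ProbabilityTheory.cond, lintegral_smul_measure, smul_eq_mul, ENNReal.div_eq_inv_mul]

/-- conditional exponential moments of a sum: if
`limsup_{ε↓0} E[exp(c Aᵢ) | 𝔸_ε] ≤ 1` for every `c ∈ ℝ` and every `i`, then
`lim_{ε↓0} E[exp(c A₁ + ⋯ + c A_n) | 𝔸_ε] = 1` for every `c ∈ ℝ`. -/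
theorem stmt19 {Ω : Type*} [MeasurableSpace Ω] (P : Measure Ω) [IsProbabilityMeasure P]
    (B : ℝ → Set Ω) (hBmeas : ∀ ε > (0:ℝ), MeasurableSet (B ε))
    (hBpos : ∀ ε > (0:ℝ), 0 < P (B ε))
    (n : ℕ) (A : Fin n → Ω → ℝ) (hA : ∀ i, Measurable (A i))
    (hup : ∀ c : ℝ, ∀ i : Fin n, limsup
      (fun ε => (∫⁻ ω in B ε, ENNReal.ofReal (Real.exp (c * A i ω)) ∂P) / P (B ε))
      (nhdsWithin 0 (Set.Ioi 0)) ≤ 1) :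
    ∀ c : ℝ, Tendsto
      (fun ε => (∫⁻ ω in B ε, ENNReal.ofReal (Real.exp (∑ i, c * A i ω)) ∂P) / P (B ε))
      (nhdsWithin 0 (Set.Ioi 0)) (nhds 1) := by
  simp only [← lintegral_cond_eq_setLIntegral_div] at hup ⊢
  exact fun c => stmt19_general
    (eventually_nhdsWithin_of_forall fun ε hε =>
      ProbabilityTheory.cond_isProbabilityMeasure (hBpos ε hε).ne')
    (fun i _ _ => (hA i).aemeasurable) (fun i _ c => hup c i) fun _ => c
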